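/- Let G be a finite connected simple graph with distinguished vertices v_in ≠ v_out such that G − v_out is connected, and suppose that the equation τ_ρ = r is solvable on G for every r ∈ Ψ(G). Let G′ be the graph obtained from G by attaching a new vertex v′ of degree 1 adjacent only to a vertex v ∈ V with v ≠ v_out, let α ∈ ℝ, and define r′ : V(G′) → ℝ by r′(w) = r(w) for w ∈ V and r′(v′) = α. If r′ ∈ Ψ(G′), then the equation τ_{ρ′} = r′ is solvable on G′. -/

import Mathlib

open scoped Classical

noncomputable section

/-- The trace of a walk: the number of occurrences of each vertex along the walk,
viewed as a vector in `ℝ^V`. -/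
def trace {V : Type*} [DecidableEq V] {G : SimpleGraph V} {u v : V} (ω : G.Walk u v) : V → ℝ :=
  fun x => (ω.support.count x : ℝ)

/-- A walk from `vin` to `vout` is proper if it visits `vout` exactly once
(namely as its final vertex). -/
def IsProper {V : Type*} [DecidableEq V] {G : SimpleGraph V} {vin vout : V}
    (ω : G.Walk vin vout) : Prop :=
  ω.support.count vout = 1

/-- The set of traces of proper walks from `vin` to `vout`, as vectors in `ℝ^V`. -/
def traceSet {V : Type*} [DecidableEq V] (G : SimpleGraph V) (vin vout : V) : Set (V → ℝ) :=
  {f | ∃ ω : G.Walk vin vout, IsProper ω ∧ f = trace ω}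

/-- `Ψ(G)`: the relative interior (interior with respect to the affine span) of the convex
hull of the traces of proper walks from `vin` to `vout`. -/
def Psi {V : Type*} [Fintype V] [DecidableEq V] (G : SimpleGraph V) (vin vout : V) :
    Set (V → ℝ) :=
  intrinsicInterior ℝ (convexHull ℝ (traceSet G vin vout))

/-- The matrix `M_β` associated to a graph `G` with distinguished vertices `vin, vout`
and vertex weights `β`. -/
def Mmat {V : Type*} [Fintype V] [DecidableEq V] (G : SimpleGraph V) (vin vout : V)
    (β : V → ℝ) : Matrix V V ℝ :=
  fun v w =>
    if (v = vout ∧ w = vout) ∨ (v = vin ∧ w = vout) then 1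
    else if G.Adj v w ∧ v ≠ vout ∧ w ≠ vout then
      β v / ∑ u ∈ Finset.univ.filter (fun u => G.Adj u w), β u
    else 0

/-- The equation `τ_ρ = r` is solvable on `G`: there is a positive vertex-weight function `β`
with `M_β r = r` and `r(vout) = 1`. -/
def Solvable {V : Type*} [Fintype V] [DecidableEq V] (G : SimpleGraph V) (vin vout : V)
    (r : V → ℝ) : Prop :=
  ∃ β : V → ℝ, (∀ v, 0 < β v) ∧ (Mmat G vin vout β).mulVec r = r ∧ r vout = 1

/-- The graph obtained from `G` by attaching a new pendant vertex (represented by `none`)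
of degree 1, adjacent only to `v`. -/
def attachPendant {V : Type*} (G : SimpleGraph V) (v : V) : SimpleGraph (Option V) :=
  SimpleGraph.fromRel (fun a b =>
    (∃ x y, a = some x ∧ b = some y ∧ G.Adj x y) ∨ (a = none ∧ b = some v))

/-!
Write `G'` for `G` with a pendant vertex `v'` attached at `v`. Cutting every excursion `v → v' → v`
out of a walk on `G'` leaves a walk on `G`, and on traces this is linear: it subtracts the
coordinate at `v'` from the one at `v`. Linear maps send relative interiors of convex sets into
relative interiors, so `r' ∈ Ψ(G')` is sent to some `r₀ ∈ Ψ(G)`, for which there are weights `β` on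
`G`. Let `S` be the total weight of the neighbours of `v` in `G`, and give `v'` the weight
`b = r'(v') S / r₀(v)`. Then `r'(v) / (S + b) = r₀(v) / S`, so the equations at the vertices of `G`
carry over to `G'`, and the one at `v'` holds by the choice of `b`. That `b` is positive follows
because a coordinate of a point of `Ψ` is positive exactly when some proper walk visits that vertex,
and a proper walk on `G` visiting `v` can be diverted through `v'`. If no proper walk visits `v`,
then `r'` vanishes at `v` and `v'`, and any positive `b` will do.
-/

section RelativeInterior

open AffineMap Topology

variable {E F : Type*} [AddCommGroup E] [Module ℝ E] [TopologicalSpace E]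
  {C : Set E} {x y z : E}

theorem mem_intrinsicInterior_iff_mem_nhdsWithin :
    x ∈ intrinsicInterior ℝ C ↔ x ∈ affineSpan ℝ C ∧ C ∈ 𝓝[affineSpan ℝ C] x := by
  rw [mem_intrinsicInterior]
  constructor
  · rintro ⟨y, hy, rfl⟩
    exact ⟨y.2, preimage_coe_mem_nhds_subtype.1 (mem_interior_iff_mem_nhds.1 hy)⟩
  · rintro ⟨hx, hC⟩
    exact ⟨⟨x, hx⟩, mem_interior_iff_mem_nhds.2 (preimage_coe_mem_nhds_subtype.2 hC), rfl⟩

variable [IsTopologicalAddGroup E] [ContinuousSMul ℝ E]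

theorem exists_one_lt_lineMap_mem (hx : x ∈ intrinsicInterior ℝ C) (hy : y ∈ C) :
    ∃ t > (1 : ℝ), lineMap y x t ∈ C := by
  obtain ⟨hxC, hC⟩ := mem_intrinsicInterior_iff_mem_nhdsWithin.1 hx
  have hspan (t : ℝ) : lineMap y x t ∈ affineSpan ℝ C :=
    lineMap_mem t (subset_affineSpan ℝ C hy) hxC
  have hlim : Filter.Tendsto (lineMap y x : ℝ → E) (𝓝[>] 1) (𝓝[affineSpan ℝ C] x) := by
    refine tendsto_nhdsWithin_iff.2 ⟨.mono_left ?_ nhdsWithin_le_nhds, .of_forall hspan⟩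
    exact lineMap_continuous.tendsto' 1 x (lineMap_apply_one y x)
  exact ((hlim.eventually hC).and self_mem_nhdsWithin).exists.imp fun _ h => h.symm

theorem lineMap_mem_intrinsicInterior (hC : Convex ℝ C) (hz : z ∈ C)
    (hy : y ∈ intrinsicInterior ℝ C) {t : ℝ} (ht : t ∈ Set.Ioc 0 1) :
    lineMap z y t ∈ intrinsicInterior ℝ C := by
  obtain ⟨hyC, hnhds⟩ := mem_intrinsicInterior_iff_mem_nhdsWithin.1 hy
  have hzC := subset_affineSpan ℝ C hz
  refine mem_intrinsicInterior_iff_mem_nhdsWithin.2 ⟨lineMap_mem t hzC hyC, ?_⟩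
  -- The homothety with centre `z` and ratio `t⁻¹` takes points near `lineMap z y t` to `C`.
  have hlim : Filter.Tendsto (homothety z t⁻¹) (𝓝[affineSpan ℝ C] (lineMap z y t))
      (𝓝[affineSpan ℝ C] y) := by
    refine (homothety_continuous z t⁻¹).continuousWithinAt.tendsto_nhdsWithin
      (fun w hw => lineMap_mem t⁻¹ hzC hw) |>.trans_eq ?_
    rw [← homothety_eq_lineMap, ← homothety_mul_apply, inv_mul_cancel₀ ht.1.ne', homothety_one,
      id_apply]
  filter_upwards [hlim hnhds] with w hw
  have hback : homothety z t (homothety z t⁻¹ w) = w := by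
    rw [← homothety_mul_apply, mul_inv_cancel₀ ht.1.ne', homothety_one, id_apply]
  rw [← hback]
  exact hC.lineMap_mem hz hw ⟨ht.1.le, ht.2⟩

variable [NormedAddCommGroup F] [NormedSpace ℝ F] [FiniteDimensional ℝ F]

theorem mem_intrinsicInterior_of_forall_exists_lineMap_mem {D : Set F} (hD : Convex ℝ D) {x : F}
    (hx : x ∈ D) (h : ∀ y ∈ D, ∃ t > (1 : ℝ), lineMap y x t ∈ D) : x ∈ intrinsicInterior ℝ D := by
  obtain ⟨y, hy⟩ := Set.Nonempty.intrinsicInterior hD ⟨x, hx⟩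
  obtain ⟨t, ht, hz⟩ := h y (intrinsicInterior_subset hy)
  have hx_eq : x = lineMap (lineMap y x t) y (1 - t⁻¹) := by
    have ht0 : t ≠ 0 := by positivity
    simp only [lineMap_apply_module]
    match_scalars <;> field_simp <;> ring
  have hpos : 0 < t⁻¹ := by positivity
  rw [hx_eq]
  exact lineMap_mem_intrinsicInterior hD hz hy
    ⟨sub_pos.2 (inv_lt_one_of_one_lt₀ ht), (sub_lt_self 1 hpos).le⟩

theorem map_mem_intrinsicInterior_image (φ : E →ᵃ[ℝ] F) (hC : Convex ℝ C)
    (hx : x ∈ intrinsicInterior ℝ C) : φ x ∈ intrinsicInterior ℝ (φ '' C) := by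
  refine mem_intrinsicInterior_of_forall_exists_lineMap_mem (hC.affine_image φ)
    (Set.mem_image_of_mem φ (intrinsicInterior_subset hx)) ?_
  rintro _ ⟨y, hy, rfl⟩
  obtain ⟨t, ht, hmem⟩ := exists_one_lt_lineMap_mem hx hy
  exact ⟨t, ht, _, hmem, apply_lineMap φ y x t⟩

theorem pos_iff_exists_pos_of_mem_intrinsicInterior_convexHull {s : Set E} (f : E →ₗ[ℝ] ℝ)
    (hf : ∀ y ∈ s, 0 ≤ f y) (hx : x ∈ intrinsicInterior ℝ (convexHull ℝ s)) :
    0 < f x ↔ ∃ y ∈ s, 0 < f y := by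
  constructor
  · contrapose!
    exact fun h => convexHull_min h (convex_halfSpace_le f.isLinear 0) (intrinsicInterior_subset hx)
  · rintro ⟨y, hy, hfy⟩
    obtain ⟨t, ht, hmem⟩ := exists_one_lt_lineMap_mem hx (subset_convexHull ℝ s hy)
    have hnonneg : 0 ≤ f (lineMap y x t) :=
      convexHull_min hf (convex_halfSpace_ge f.isLinear 0) hmem
    simp only [lineMap_apply_module, map_add, map_smul, smul_eq_mul] at hnonneg
    nlinarith [mul_pos (sub_pos.2 ht) hfy]

end RelativeInterior

section Trace

open SimpleGraph

theorem exists_adj_of_mem_support_of_ne {V : Type*} {G : SimpleGraph V} {u v w : V}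
    {ω : G.Walk u w} (hmem : v ∈ ω.support) (hv : v ≠ w) : ∃ x, G.Adj x v := by
  obtain ⟨-, q, -⟩ := Walk.mem_support_iff_exists_append.1 hmem
  exact ⟨q.snd, (q.adj_snd (Walk.not_nil_of_ne hv)).symm⟩

variable {V : Type*} [DecidableEq V] {G : SimpleGraph V} {u v w x y vin vout : V}

theorem trace_nonneg (ω : G.Walk u v) (x : V) : 0 ≤ trace ω x := Nat.cast_nonneg _

theorem trace_pos_iff {ω : G.Walk u v} : 0 < trace ω x ↔ x ∈ ω.support := by
  simp [trace]

theorem isProper_iff_trace_eq_one {ω : G.Walk vin vout} : IsProper ω ↔ trace ω vout = 1 := by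
  simp [IsProper, trace]

theorem trace_nil : trace (Walk.nil : G.Walk u u) = Pi.single u 1 := by
  ext x
  simp [trace, List.count_singleton, Pi.single_apply, eq_comm (a := x)]

theorem trace_cons (h : G.Adj u v) (p : G.Walk v w) :
    trace (p.cons h) = Pi.single u 1 + trace p := by
  ext x
  simp [trace, List.count_cons, Pi.single_apply, eq_comm (a := x), add_comm]

theorem trace_append (p : G.Walk u v) (q : G.Walk v w) :
    trace (p.append q) = trace p + trace q - Pi.single v 1 := by
  induction p with
  | nil => simp [trace_nil]
  | cons h p ih => rw [Walk.cons_append, trace_cons, trace_cons, ih]; abel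

theorem trace_map_apply {W : Type*} [DecidableEq W] {H : SimpleGraph W} (f : G →g H)
    (hf : Function.Injective f) (ω : G.Walk u v) (x : V) : trace (ω.map f) (f x) = trace ω x := by
  simp [trace, List.count_map_of_injective _ _ hf]

theorem exists_walk_trace_eq_add_excursion (ω : G.Walk u w) (hx : x ∈ ω.support)
    (h : G.Adj x y) : ∃ ω' : G.Walk u w, trace ω' = trace ω + Pi.single x 1 + Pi.single y 1 := by
  obtain ⟨p, q, rfl⟩ := Walk.mem_support_iff_exists_append.1 hx
  refine ⟨p.append ((q.cons h.symm).cons h), ?_⟩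
  simp only [trace_append, trace_cons]
  abel

variable [Fintype V] {r : V → ℝ}

theorem nonneg_of_mem_Psi (hr : r ∈ Psi G vin vout) (x : V) : 0 ≤ r x := by
  refine convexHull_min (t := {f | 0 ≤ f x}) ?_ ?_ (intrinsicInterior_subset hr)
  · rintro _ ⟨ω, -, rfl⟩
    exact trace_nonneg ω x
  · exact convex_halfSpace_ge (LinearMap.proj x : (V → ℝ) →ₗ[ℝ] ℝ).isLinear 0

theorem pos_iff_exists_isProper_of_mem_Psi (hr : r ∈ Psi G vin vout) :
    0 < r x ↔ ∃ ω : G.Walk vin vout, IsProper ω ∧ x ∈ ω.support := by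
  have hiff := pos_iff_exists_pos_of_mem_intrinsicInterior_convexHull
    (LinearMap.proj x : (V → ℝ) →ₗ[ℝ] ℝ)
    (by rintro _ ⟨ω, -, rfl⟩; exact trace_nonneg ω x) hr
  simp only [LinearMap.proj_apply] at hiff
  rw [hiff]
  constructor
  · rintro ⟨_, ⟨ω, hω, rfl⟩, hpos⟩
    exact ⟨ω, hω, trace_pos_iff.1 hpos⟩
  · rintro ⟨ω, hω, hx⟩
    exact ⟨_, ⟨ω, hω, rfl⟩, trace_pos_iff.2 hx⟩

end Trace

section Pendant

open SimpleGraph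

variable {V : Type*} {G : SimpleGraph V} {v : V}

@[simp]
theorem attachPendant_adj_some_some {a b : V} :
    (attachPendant G v).Adj (some a) (some b) ↔ G.Adj a b := by
  simpa [attachPendant, adj_comm] using Adj.ne

@[simp]
theorem attachPendant_adj_none_some {a : V} : (attachPendant G v).Adj none (some a) ↔ a = v := by
  simp [attachPendant]

@[simp]
theorem attachPendant_adj_some_none {a : V} : (attachPendant G v).Adj (some a) none ↔ a = v := by
  rw [adj_comm, attachPendant_adj_none_some]

variable (G v) in
/-- The inclusion of `G` into the graph with a pendant vertex attached. -/
def attachPendantHom : G →g attachPendant G v where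
  toFun := some
  map_rel' := attachPendant_adj_some_some.2

variable (v) in
/-- A walk on `G` seen as a walk on the graph with a pendant vertex attached at `v`. -/
def liftWalk {a b : V} (ω : G.Walk a b) : (attachPendant G v).Walk (some a) (some b) :=
  ω.map (attachPendantHom G v)

theorem support_liftWalk {a b : V} (ω : G.Walk a b) :
    (liftWalk v ω).support = ω.support.map some :=
  Walk.support_map _ _

variable [DecidableEq V]

@[simp]
theorem trace_liftWalk_some {a b : V} (ω : G.Walk a b) (w : V) :
    trace (liftWalk v ω) (some w) = trace ω w :=
  trace_map_apply (attachPendantHom G v) (Option.some_injective V) ω w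

@[simp]
theorem trace_liftWalk_none {a b : V} (ω : G.Walk a b) : trace (liftWalk v ω) none = 0 := by
  simp [trace, support_liftWalk, List.count_eq_zero]

theorem isProper_liftWalk_iff {vin vout : V} {ω : G.Walk vin vout} :
    IsProper (liftWalk v ω) ↔ IsProper ω := by
  rw [isProper_iff_trace_eq_one, isProper_iff_trace_eq_one, trace_liftWalk_some]

/-- The effect on traces of cutting the excursions to the pendant vertex out of a walk: each visit
to the pendant vertex cancels one visit to its neighbour `v`. -/
def foldPendant (v : V) : (Option V → ℝ) →ₗ[ℝ] (V → ℝ) :=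
  LinearMap.funLeft ℝ ℝ some - LinearMap.single ℝ (fun _ => ℝ) v ∘ₗ LinearMap.proj none

theorem foldPendant_apply (f : Option V → ℝ) (w : V) :
    foldPendant v f w = f (some w) - if w = v then f none else 0 := by
  simp [foldPendant, LinearMap.funLeft_apply, Pi.single_apply]

@[simp]
theorem foldPendant_single_none (c : ℝ) :
    foldPendant v (Pi.single none c) = -Pi.single v c := by
  ext w
  simp [foldPendant_apply, Pi.single_apply]

@[simp]
theorem foldPendant_single_some (a : V) (c : ℝ) :
    foldPendant v (Pi.single (some a) c) = Pi.single a c := by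
  ext w
  simp [foldPendant_apply, Pi.single_apply]

theorem foldPendant_trace_liftWalk {a b : V} (ω : G.Walk a b) :
    foldPendant v (trace (liftWalk v ω)) = trace ω := by
  ext w
  simp [foldPendant_apply]

-- For `x = none` the walk `q` starts at `v`, a visit that `p` does not make: hence the correction.
theorem exists_walk_foldPendant_trace_eq {x : Option V} {b : V}
    (p : (attachPendant G v).Walk x (some b)) :
    ∃ q : G.Walk (x.getD v) b,
      foldPendant v (trace p) = trace q - (if x = none then Pi.single v 1 else 0) ∧
      (none ∈ p.support → v ∈ q.support) := by
  generalize hy : some b = y at p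
  induction p with
  | nil =>
    subst hy
    exact ⟨Walk.nil, by simp [trace_nil], by simp⟩
  | @cons x z _ h p ih =>
    obtain ⟨q, htrace, hmem⟩ := ih hy
    rw [trace_cons, map_add, htrace]
    rcases x with _ | a <;> rcases z with _ | c
    · exact absurd h (SimpleGraph.irrefl _)
    · obtain rfl := attachPendant_adj_none_some.1 h
      exact ⟨q, by simp [sub_eq_neg_add], fun _ => q.start_mem_support⟩
    · obtain rfl := attachPendant_adj_some_none.1 h
      exact ⟨q, by simp, fun _ => q.start_mem_support⟩
    · refine ⟨q.cons (attachPendant_adj_some_some.1 h), by simp [trace_cons], fun hnone => ?_⟩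
      exact List.mem_cons_of_mem _ (hmem (by simpa using hnone))

variable {vin vout : V}

theorem exists_isProper_foldPendant_trace_eq (hv : v ≠ vout)
    {p : (attachPendant G v).Walk (some vin) (some vout)} (hp : IsProper p) :
    ∃ q : G.Walk vin vout, IsProper q ∧ foldPendant v (trace p) = trace q ∧
      (none ∈ p.support → v ∈ q.support) := by
  obtain ⟨q, htrace, hmem⟩ := exists_walk_foldPendant_trace_eq p
  rw [if_neg (Option.some_ne_none vin), sub_zero] at htrace
  refine ⟨q, isProper_iff_trace_eq_one.2 ?_, htrace, hmem⟩
  rw [← isProper_iff_trace_eq_one.1 hp, ← congrFun htrace vout]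
  simp [foldPendant_apply, hv.symm]

theorem foldPendant_image_traceSet (hv : v ≠ vout) :
    foldPendant v '' traceSet (attachPendant G v) (some vin) (some vout) =
      traceSet G vin vout := by
  apply Set.Subset.antisymm
  · rintro _ ⟨_, ⟨p, hp, rfl⟩, rfl⟩
    obtain ⟨q, hq, htrace, -⟩ := exists_isProper_foldPendant_trace_eq hv hp
    exact ⟨q, hq, htrace⟩
  · rintro _ ⟨ω, hω, rfl⟩
    exact ⟨_, ⟨_, isProper_liftWalk_iff.2 hω, rfl⟩, foldPendant_trace_liftWalk ω⟩

theorem exists_isProper_none_mem_support_iff (hv : v ≠ vout) :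
    (∃ p : (attachPendant G v).Walk (some vin) (some vout), IsProper p ∧ none ∈ p.support) ↔
      ∃ q : G.Walk vin vout, IsProper q ∧ v ∈ q.support := by
  constructor
  · rintro ⟨p, hp, hnone⟩
    obtain ⟨q, hq, -, hmem⟩ := exists_isProper_foldPendant_trace_eq hv hp
    exact ⟨q, hq, hmem hnone⟩
  · rintro ⟨q, hq, hmem⟩
    have hmem' : some v ∈ (liftWalk v q).support := by
      rw [support_liftWalk]
      exact List.mem_map_of_mem hmem
    obtain ⟨p, hp⟩ := exists_walk_trace_eq_add_excursion _ hmem'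
      (attachPendant_adj_some_none.2 rfl)
    refine ⟨p, isProper_iff_trace_eq_one.2 ?_, trace_pos_iff.1 ?_⟩
    · simpa [hp, hv.symm] using isProper_iff_trace_eq_one.1 hq
    · simp [hp]

variable [Fintype V] {r' : Option V → ℝ}

theorem foldPendant_mem_Psi (hv : v ≠ vout)
    (hr' : r' ∈ Psi (attachPendant G v) (some vin) (some vout)) :
    foldPendant v r' ∈ Psi G vin vout := by
  have himage := map_mem_intrinsicInterior_image (foldPendant v).toAffineMap
    (convex_convexHull ℝ _) hr'
  rwa [LinearMap.coe_toAffineMap, LinearMap.image_convexHull, foldPendant_image_traceSet hv]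
    at himage

theorem pos_none_iff_of_mem_Psi (hv : v ≠ vout)
    (hr' : r' ∈ Psi (attachPendant G v) (some vin) (some vout)) :
    0 < r' none ↔ 0 < foldPendant v r' v := by
  rw [pos_iff_exists_isProper_of_mem_Psi hr',
    pos_iff_exists_isProper_of_mem_Psi (foldPendant_mem_Psi hv hr'),
    exists_isProper_none_mem_support_iff hv]

end Pendant

theorem exists_pos_mul_eq_of_pos_iff {s t : ℝ} (hs : 0 ≤ s) (ht : 0 ≤ t) (h : 0 < t ↔ 0 < s) :
    ∃ b > 0, b * s = t := by
  obtain rfl | hs := hs.eq_or_lt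
  · exact ⟨1, one_pos, by simpa using (not_lt.1 (mt h.1 (lt_irrefl 0))).antisymm ht |>.symm⟩
  · exact ⟨t / s, div_pos (h.2 hs) hs, div_mul_cancel₀ t hs.ne'⟩

section Balance

variable {V : Type*} [Fintype V] {G : SimpleGraph V} {β r : V → ℝ} {v x vin vout : V}

/-- The total weight of the neighbours of `w`, the denominator in column `w` of `M_β`. It is `0`
at an isolated vertex. -/
def nbhdWeight (G : SimpleGraph V) (β : V → ℝ) (w : V) : ℝ :=
  ∑ u with G.Adj u w, β u

theorem nbhdWeight_nonneg (hβ : ∀ u, 0 ≤ β u) (w : V) : 0 ≤ nbhdWeight G β w :=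
  Finset.sum_nonneg fun u _ => hβ u

theorem nbhdWeight_pos (hβ : ∀ u, 0 < β u) {u w : V} (h : G.Adj u w) : 0 < nbhdWeight G β w :=
  Finset.sum_pos (fun u _ => hβ u) ⟨u, by simpa using h⟩

variable [DecidableEq V]

theorem nbhdWeight_pos_of_mem_Psi (hβ : ∀ u, 0 < β u) (hr : r ∈ Psi G vin vout) (hv : v ≠ vout)
    (hpos : 0 < r v) : 0 < nbhdWeight G β v := by
  obtain ⟨ω, -, hmem⟩ := (pos_iff_exists_isProper_of_mem_Psi hr).1 hpos
  obtain ⟨u, hu⟩ := exists_adj_of_mem_support_of_ne hmem hv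
  exact nbhdWeight_pos hβ hu

theorem Mmat_mulVec_apply_out : (Mmat G vin vout β).mulVec r vout = r vout := by
  have hentry (w : V) : Mmat G vin vout β vout w = if w = vout then 1 else 0 := by
    by_cases hw : w = vout <;> simp [Mmat, hw]
  simp [Matrix.mulVec, dotProduct, hentry]

theorem Mmat_mulVec_apply_of_ne (hx : x ≠ vout) :
    (Mmat G vin vout β).mulVec r x = (if x = vin then r vout else 0) +
      β x * ∑ w with G.Adj x w ∧ w ≠ vout, r w / nbhdWeight G β w := by
  have hentry (w : V) : Mmat G vin vout β x w * r w =
      (if w = vout then if x = vin then r vout else 0 else 0) +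
        if G.Adj x w ∧ w ≠ vout then β x * (r w / nbhdWeight G β w) else 0 := by
    by_cases hw : w = vout
    · simp [Mmat, hx, hw]
    · simp [Mmat, hx, hw, nbhdWeight, mul_div_assoc', mul_div_right_comm]
  simp only [Matrix.mulVec, dotProduct, hentry, Finset.sum_add_distrib, Finset.sum_ite_eq',
    Finset.mem_univ, if_true, Finset.sum_filter, Finset.mul_sum, mul_ite, mul_zero]

theorem Mmat_mulVec_eq_self_iff :
    (Mmat G vin vout β).mulVec r = r ↔ ∀ x ≠ vout, r x = (if x = vin then r vout else 0) +
      β x * ∑ w with G.Adj x w ∧ w ≠ vout, r w / nbhdWeight G β w := by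
  refine funext_iff.trans (forall_congr' fun x => ?_)
  by_cases hx : x = vout
  · simp [hx, Mmat_mulVec_apply_out]
  · simp [hx, Mmat_mulVec_apply_of_ne hx, eq_comm]

end Balance

section PendantBalance

variable {V : Type*} [Fintype V] {G : SimpleGraph V} {β : V → ℝ} {v vin vout : V} {b : ℝ}

theorem nbhdWeight_attachPendant_none :
    nbhdWeight (attachPendant G v) (fun o => o.elim b β) none = β v := by
  simp [nbhdWeight, Finset.sum_filter, Fintype.sum_option]

variable [DecidableEq V] {r' : Option V → ℝ}

theorem nbhdWeight_attachPendant_some (w : V) :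
    nbhdWeight (attachPendant G v) (fun o => o.elim b β) (some w) =
      nbhdWeight G β w + if w = v then b else 0 := by
  simp [nbhdWeight, Finset.sum_filter, Fintype.sum_option, add_comm]

theorem div_nbhdWeight_attachPendant_some (hβ : ∀ u, 0 < β u) (hb : 0 < b)
    (hisolated : nbhdWeight G β v = 0 → foldPendant v r' v = 0)
    (hflow : b * (foldPendant v r' v / nbhdWeight G β v) = r' none) (w : V) :
    r' (some w) / nbhdWeight (attachPendant G v) (fun o => o.elim b β) (some w) =
      foldPendant v r' w / nbhdWeight G β w := by
  rw [nbhdWeight_attachPendant_some]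
  obtain rfl | hw := eq_or_ne w v
  · have hrw : r' (some w) = foldPendant w r' w + r' none := by simp [foldPendant_apply]
    have hS := nbhdWeight_nonneg (G := G) (fun u => (hβ u).le) w
    rw [if_pos rfl, div_eq_iff (by positivity), hrw, mul_add, mul_comm _ b, hflow,
      div_mul_cancel_of_imp hisolated]
  · simp [foldPendant_apply, hw]

theorem Mmat_attachPendant_mulVec_eq_self (hv : v ≠ vout) (hβ : ∀ u, 0 < β u) (hb : 0 < b)
    (hisolated : nbhdWeight G β v = 0 → foldPendant v r' v = 0)
    (hflow : b * (foldPendant v r' v / nbhdWeight G β v) = r' none)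
    (hM : (Mmat G vin vout β).mulVec (foldPendant v r') = foldPendant v r') :
    (Mmat (attachPendant G v) (some vin) (some vout) (fun o => o.elim b β)).mulVec r' = r' := by
  have hratio := div_nbhdWeight_attachPendant_some hβ hb hisolated hflow
  refine Mmat_mulVec_eq_self_iff.2 ?_
  rintro (_ | x) hx
  · simp [Finset.sum_filter, Fintype.sum_option, hratio, ite_and, hv, hflow]
  · have hx' : x ≠ vout := by simpa using hx
    have hbalance := Mmat_mulVec_eq_self_iff.1 hM x hx'
    have hsum : ∑ o with (attachPendant G v).Adj (some x) o ∧ o ≠ some vout,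
          r' o / nbhdWeight (attachPendant G v) (fun o => o.elim b β) o =
        (if x = v then r' none / β v else 0) +
          ∑ w with G.Adj x w ∧ w ≠ vout, foldPendant v r' w / nbhdWeight G β w := by
      simp [Finset.sum_filter, Fintype.sum_option, hratio, nbhdWeight_attachPendant_none]
    have hexcursion :
        β x * (if x = v then r' none / β v else 0) = if x = v then r' none else 0 := by
      split_ifs with hxv
      · rw [hxv, mul_div_cancel₀ _ (hβ v).ne']
      · exact mul_zero _
    have hout : foldPendant v r' vout = r' (some vout) := by simp [foldPendant_apply, hv.symm]
    rw [foldPendant_apply, sub_eq_iff_eq_add, hout] at hbalance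
    simp only [hsum, Option.elim_some, mul_add, hexcursion, hbalance, Option.some.injEq]
    ring

theorem exists_pendantWeight_of_mem_Psi (hv : v ≠ vout) (hβ : ∀ u, 0 < β u)
    (hr' : r' ∈ Psi (attachPendant G v) (some vin) (some vout)) :
    ∃ b > 0, b * (foldPendant v r' v / nbhdWeight G β v) = r' none := by
  have hr₀ := foldPendant_mem_Psi hv hr'
  have hr₀v := nonneg_of_mem_Psi hr₀ v
  have hS := nbhdWeight_nonneg (G := G) (fun u => (hβ u).le) v
  refine exists_pos_mul_eq_of_pos_iff (div_nonneg hr₀v hS)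
    (nonneg_of_mem_Psi hr' none) ((pos_none_iff_of_mem_Psi hv hr').trans ⟨fun hpos => ?_, ?_⟩)
  · exact div_pos hpos (nbhdWeight_pos_of_mem_Psi hβ hr₀ hv hpos)
  · exact fun hpos => hr₀v.lt_of_ne' (div_ne_zero_iff.1 hpos.ne').1

end PendantBalance

theorem solvable_attachPendant_of_mem_Psi_general {V : Type*} [Fintype V] [DecidableEq V]
    {G : SimpleGraph V} {vin vout v : V} (hsolvG : ∀ r ∈ Psi G vin vout, Solvable G vin vout r)
    (hv : v ≠ vout) {r' : Option V → ℝ}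
    (hr' : r' ∈ Psi (attachPendant G v) (some vin) (some vout)) :
    Solvable (attachPendant G v) (some vin) (some vout) r' := by
  have hr₀ := foldPendant_mem_Psi hv hr'
  obtain ⟨β, hβ, hM, hout⟩ := hsolvG _ hr₀
  have hisolated (hzero : nbhdWeight G β v = 0) : foldPendant v r' v = 0 :=
    (nonneg_of_mem_Psi hr₀ v).eq_of_not_lt' fun hpos =>
      (nbhdWeight_pos_of_mem_Psi hβ hr₀ hv hpos).ne' hzero
  obtain ⟨b, hb, hflow⟩ := exists_pendantWeight_of_mem_Psi hv hβ hr'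
  refine ⟨fun o => o.elim b β, ?_,
    Mmat_attachPendant_mulVec_eq_self hv hβ hb hisolated hflow hM, ?_⟩
  · rintro (_ | x)
    exacts [hb, hβ x]
  · simpa [foldPendant_apply, hv.symm] using hout

/-- If `τ_ρ = r` is solvable on `G` for every `r ∈ Ψ(G)`, and `r' ∈ Ψ(G')` where `G'` is
obtained from `G` by attaching a pendant vertex to `v ≠ vout`, then `τ_{ρ'} = r'` is
solvable on `G'`. -/
theorem solvable_attachPendant_of_mem_Psi {V : Type*} [Fintype V] [DecidableEq V]
    (G : SimpleGraph V) (hG : G.Connected) (vin vout : V) (hne : vin ≠ vout)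
    (hconn : (G.induce {x | x ≠ vout}).Connected)
    (hsolvG : ∀ r ∈ Psi G vin vout, Solvable G vin vout r)
    (v : V) (hv : v ≠ vout) (α : ℝ) (r : V → ℝ)
    (h : (fun o => o.elim α r) ∈ Psi (attachPendant G v) (some vin) (some vout)) :
    Solvable (attachPendant G v) (some vin) (some vout) (fun o => o.elim α r) :=
  solvable_attachPendant_of_mem_Psi_general hsolvG hv h

end
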